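/- Let λ, μ₁ ∈ ℝ and let n be an integer with 2 ≤ n ≤ 4. Then there exists a constant ε > 0 such that the equation 2r²h(r)h''(r) = (n-1)h(r)(h(r)-1) + r h'(r)(r h'(r) - λr - (n-1)), h(r) > 0, has a unique solution h ∈ C²((0,ε)) ∩ C¹([0,ε)) on (0,ε) satisfying h(0) = 1 and h'(0) = μ₁. -/

import Mathlib

open Set Filter Topology

/-- `h` is a solution of
`2r²h h'' = (n-1)h(h-1) + r h'(r h' - λr - (n-1))`, `h > 0` on `(0,ε)`,
with `h ∈ C²((0,ε)) ∩ C¹([0,ε))`, `h(0) = 1` and `h'(0) = μ₁`. -/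
def IsSolOn (n : ℕ) (lam μ₁ ε : ℝ) (h : ℝ → ℝ) : Prop :=
  ContDiffOn ℝ 2 h (Set.Ioo 0 ε) ∧ ContDiffOn ℝ 1 h (Set.Ico 0 ε) ∧
  (∀ r ∈ Set.Ioo (0 : ℝ) ε,
    2 * r ^ 2 * h r * deriv (deriv h) r =
      ((n : ℝ) - 1) * h r * (h r - 1) +
        r * deriv h r * (r * deriv h r - lam * r - ((n : ℝ) - 1)) ∧ 0 < h r) ∧
  h 0 = 1 ∧ derivWithin h (Set.Ici 0) 0 = μ₁


noncomputable def FF (m lam s w v : ℝ) : ℝ :=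
  (m*v*w + m*w^2 + (w+v)*(w+v-lam)) / (2*(1+s*w))

lemma FF_lip (m lam A c S : ℝ) (hA : 0 ≤ A) (hc : 0 < c) (hS : 0 ≤ S) : ∃ L : ℝ, 0 < L ∧
    ∀ s w1 v1 w2 v2 : ℝ, |s| ≤ S → |w1| ≤ A → |v1| ≤ A → |w2| ≤ A → |v2| ≤ A →
    c ≤ 1 + s*w1 → c ≤ 1+s*w2 →
    |FF m lam s w1 v1 - FF m lam s w2 v2| ≤ L * (|w1-w2| + |v1-v2|) := by
  set L1 := |m| * A + |m| * A + |m| * (A+A) + (A+A+A+A+|lam|) with hL1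
  set B := |m| * A*A + |m| * A^2 + (A+A)*(A+A+|lam|) with hB
  have hL1' : 0 ≤ L1 := by positivity
  have hB' : 0 ≤ B := by positivity
  refine ⟨L1/(2*c) + B*S/(2*c*c) + 1, by positivity, ?_⟩
  intro s w1 v1 w2 v2 hs hw1 hv1 hw2 hv2 hd1 hd2
  set D := |w1-w2| + |v1-v2| with hD
  have hD0 : 0 ≤ D := by positivity
  have e1 : |w1-w2| ≤ D := by simp [hD]
  have e2 : |v1-v2| ≤ D := by simp [hD]
  have h1 : |m*v1*(w1-w2) + m*w2*(v1-v2) + m*(w1+w2)*(w1-w2)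
      + ((w1-w2)+(v1-v2))*(w1+v1+w2+v2-lam)| ≤ L1 * D := by
    have a1 : |m*v1*(w1-w2)| ≤ |m| * A*D := by
      rw [abs_mul, abs_mul]; gcongr
    have a2 : |m*w2*(v1-v2)| ≤ |m| * A*D := by
      rw [abs_mul, abs_mul]; gcongr
    have a3 : |m*(w1+w2)*(w1-w2)| ≤ |m| * (A+A)*D := by
      rw [abs_mul, abs_mul]; gcongr
      exact (abs_add_le _ _).trans (add_le_add hw1 hw2)
    have a4 : |((w1-w2)+(v1-v2))*(w1+v1+w2+v2-lam)| ≤ D*(A+A+A+A+|lam|) := by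
      rw [abs_mul]; gcongr
      · exact abs_add_le _ _
      · have := abs_sub (w1+v1+w2+v2) lam
        have := abs_add_le (w1+v1+w2) v2
        have := abs_add_le (w1+v1) w2
        have := abs_add_le w1 v1
        linarith
    refine (abs_add_le _ _).trans ?_
    have := abs_add_le (m*v1*(w1-w2) + m*w2*(v1-v2)) (m*(w1+w2)*(w1-w2))
    have := abs_add_le (m*v1*(w1-w2)) (m*w2*(v1-v2))
    rw [hL1]; nlinarith
  have h2 : |m*v2*w2 + m*w2^2 + (w2+v2)*(w2+v2-lam)| ≤ B := by
    have a1 : |m*v2*w2| ≤ |m| * A*A := by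
      rw [abs_mul, abs_mul]; gcongr
    have a2 : |m*w2^2| ≤ |m| * A^2 := by
      rw [abs_mul, abs_pow]; gcongr
    have a4 : |(w2+v2)*(w2+v2-lam)| ≤ (A+A)*(A+A+|lam|) := by
      have := abs_add_le w2 v2
      rw [abs_mul]; gcongr
      · linarith
      · have := abs_sub (w2+v2) lam
        linarith
    have := abs_add_le (m*v2*w2 + m*w2^2) ((w2+v2)*(w2+v2-lam))
    have := abs_add_le (m*v2*w2) (m*w2^2)
    rw [hB]; linarith
  have p1 : 0 < 1+s*w1 := by linarith
  have p2 : 0 < 1+s*w2 := by linarith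
  have key : FF m lam s w1 v1 - FF m lam s w2 v2 =
      (m*v1*(w1-w2) + m*w2*(v1-v2) + m*(w1+w2)*(w1-w2)
      + ((w1-w2)+(v1-v2))*(w1+v1+w2+v2-lam)) / (2*(1+s*w1)) -
      (m*v2*w2 + m*w2^2 + (w2+v2)*(w2+v2-lam)) * (s*(w1-w2)) / (2*(1+s*w1)*(1+s*w2)) := by
    have p1' := p1.ne'
    have p2' := p2.ne'
    rw [show s*(w1-w2) = (1+s*w1) - (1+s*w2) by ring]
    unfold FF
    generalize 1+s*w1 = d1 at *
    generalize 1+s*w2 = d2 at *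
    field_simp; ring
  rw [key]
  refine (abs_sub _ _).trans ?_
  have b1 : |(m*v1*(w1-w2) + m*w2*(v1-v2) + m*(w1+w2)*(w1-w2)
      + ((w1-w2)+(v1-v2))*(w1+v1+w2+v2-lam)) / (2*(1+s*w1))| ≤ L1*D/(2*c) := by
    rw [abs_div, abs_of_pos (by positivity : 0 < 2*(1+s*w1))]
    gcongr
  have b2 : |(m*v2*w2 + m*w2^2 + (w2+v2)*(w2+v2-lam)) * (s*(w1-w2)) / (2*(1+s*w1)*(1+s*w2))|
      ≤ B*(S*D)/(2*c*c) := by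
    rw [abs_div, abs_of_pos (by positivity : 0 < 2*(1+s*w1)*(1+s*w2)), abs_mul, abs_mul]
    gcongr
  calc _ ≤ L1*D/(2*c) + B*(S*D)/(2*c*c) := add_le_add b1 b2
    _ = (L1/(2*c) + B*S/(2*c*c)) * D := by ring
    _ ≤ _ := mul_le_mul_of_nonneg_right (by linarith) hD0

lemma key_le (k R : ℝ) (hk : 0 < k) (v f β β' : ℝ → ℝ)
    (hv : ContinuousOn v (Icc 0 R)) (hβ : ContinuousOn β (Icc 0 R))
    (hβ0 : ∀ r ∈ Icc 0 R, 0 ≤ β r)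
    (hdv : ∀ r ∈ Ioo 0 R, HasDerivAt v (-k * v r / r + f r) r)
    (hdβ : ∀ r ∈ Ioo 0 R, HasDerivAt β (β' r) r)
    (hv0 : v 0 = 0)
    (hf : ∀ r ∈ Ioo 0 R, f r ≤ β' r) : ∀ r ∈ Icc 0 R, v r ≤ β r := by
  intro r hr
  have mono : MonotoneOn (fun r => r^k * (β r - v r)) (Icc 0 R) := by
    apply monotoneOn_of_hasDerivWithinAt_nonneg (convex_Icc 0 R)
      (f' := fun r => k * r^(k-1) * (β r - v r) + r^k * (β' r - (-k * v r / r + f r)))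
    · exact ((Real.continuous_rpow_const hk.le).continuousOn).mul (hβ.sub hv)
    · intro x hx
      rw [interior_Icc] at hx
      exact ((Real.hasDerivAt_rpow_const (Or.inl hx.1.ne')).mul
        ((hdβ x hx).sub (hdv x hx))).hasDerivWithinAt
    · intro x hx
      rw [interior_Icc] at hx
      have hx0 := hx.1
      rw [Real.rpow_sub_one hx0.ne']
      have : k * (x^k/x) * (β x - v x) + x^k * (β' x - (-k * v x / x + f x))
        = x^k * (k * β x / x + (β' x - f x)) := by field_simp; ring
      rw [this]
      have := hf x hx
      have := hβ0 x ⟨hx.1.le, hx.2.le⟩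
      have : 0 ≤ β' x - f x := by linarith
      positivity
  rcases hr.1.eq_or_lt with h0 | h0
  · rw [← h0, hv0]; exact hβ0 0 ⟨le_rfl, hr.1.trans hr.2⟩
  have := mono ⟨le_rfl, hr.1.trans hr.2⟩ hr hr.1
  simp only [Real.zero_rpow hk.ne', zero_mul] at this
  have := nonneg_of_mul_nonneg_right this (Real.rpow_pos_of_pos h0 k)
  linarith

lemma key_abs (k R : ℝ) (hk : 0 < k) (v f β β' : ℝ → ℝ)
    (hv : ContinuousOn v (Icc 0 R)) (hβ : ContinuousOn β (Icc 0 R))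
    (hβ0 : ∀ r ∈ Icc 0 R, 0 ≤ β r)
    (hdv : ∀ r ∈ Ioo 0 R, HasDerivAt v (-k * v r / r + f r) r)
    (hdβ : ∀ r ∈ Ioo 0 R, HasDerivAt β (β' r) r)
    (hv0 : v 0 = 0)
    (hf : ∀ r ∈ Ioo 0 R, |f r| ≤ β' r) : ∀ r ∈ Icc 0 R, |v r| ≤ β r := by
  intro r hr
  rw [abs_le']
  refine ⟨key_le k R hk v f β β' hv hβ hβ0 hdv hdβ hv0 (fun r hr => (le_abs_self _).trans (hf r hr)) r hr,
    key_le k R hk (fun r => - v r) (fun r => - f r) β β' hv.neg hβ hβ0 ?_ hdβ (by simp [hv0])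
     (fun r hr => (neg_le_abs _).trans (hf r hr)) r hr⟩
  intro r hr
  exact (hdv r hr).neg.congr_deriv (by ring)

lemma uniq (m lam k R : ℝ) (hk : 0 < k) (w1 w2 v1 v2 : ℝ → ℝ)
    (cw1 : ContinuousOn w1 (Icc 0 R)) (cw2 : ContinuousOn w2 (Icc 0 R))
    (cv1 : ContinuousOn v1 (Icc 0 R)) (cv2 : ContinuousOn v2 (Icc 0 R))
    (hw0 : w1 0 = w2 0) (hv1 : v1 0 = 0) (hv2 : v2 0 = 0)
    (p1 : ∀ r ∈ Icc 0 R, 0 < 1 + r * w1 r) (p2 : ∀ r ∈ Icc 0 R, 0 < 1 + r * w2 r)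
    (dw1 : ∀ r ∈ Ioo 0 R, HasDerivAt w1 (v1 r / r) r)
    (dw2 : ∀ r ∈ Ioo 0 R, HasDerivAt w2 (v2 r / r) r)
    (dv1 : ∀ r ∈ Ioo 0 R, HasDerivAt v1 (-k * v1 r / r + FF m lam r (w1 r) (v1 r)) r)
    (dv2 : ∀ r ∈ Ioo 0 R, HasDerivAt v2 (-k * v2 r / r + FF m lam r (w2 r) (v2 r)) r) :
    ∀ r ∈ Icc 0 R, w1 r = w2 r := by
  intro r hr
  have hR : 0 ≤ R := hr.1.trans hr.2
  have hne : (Icc 0 R).Nonempty := ⟨r, hr⟩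
  obtain ⟨A1, hA1⟩ := isCompact_Icc.exists_bound_of_continuousOn cw1
  obtain ⟨A2, hA2⟩ := isCompact_Icc.exists_bound_of_continuousOn cw2
  obtain ⟨A3, hA3⟩ := isCompact_Icc.exists_bound_of_continuousOn cv1
  obtain ⟨A4, hA4⟩ := isCompact_Icc.exists_bound_of_continuousOn cv2
  obtain ⟨x1, hx1, hm1⟩ := isCompact_Icc.exists_isMinOn hne
    (f := fun r => 1 + r * w1 r) (by fun_prop)
  obtain ⟨x2, hx2, hm2⟩ := isCompact_Icc.exists_isMinOn hne
    (f := fun r => 1 + r * w2 r) (by fun_prop)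
  simp only [Real.norm_eq_abs] at hA1 hA2 hA3 hA4
  set A := max (max A1 A2) (max A3 A4) with hA
  have q1 : A1 ≤ A := by simp [hA]
  have q2 : A2 ≤ A := by simp [hA]
  have q3 : A3 ≤ A := by simp [hA]
  have q4 : A4 ≤ A := by simp [hA]
  have hA0 : 0 ≤ A := (abs_nonneg _).trans ((hA1 r hr).trans q1)
  obtain ⟨L, hL, lip⟩ := FF_lip m lam A (min (1 + x1 * w1 x1) (1 + x2 * w2 x2)) R hA0
    (lt_min (p1 _ hx1) (p2 _ hx2)) hR
  have lip' : ∀ x ∈ Icc 0 R, |FF m lam x (w1 x) (v1 x) - FF m lam x (w2 x) (v2 x)|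
      ≤ L * (|w1 x - w2 x| + |v1 x - v2 x|) := by
    intro x hx
    apply lip
    · rw [abs_of_nonneg hx.1]; exact hx.2
    · exact (hA1 x hx).trans q1
    · exact (hA3 x hx).trans q3
    · exact (hA2 x hx).trans q2
    · exact (hA4 x hx).trans q4
    · exact (min_le_left _ _).trans (hm1 hx)
    · exact (min_le_right _ _).trans (hm2 hx)
  set K := 4 * L with hK
  have hβd : ∀ N x : ℝ, HasDerivAt (fun x => N * (x * Real.exp (K*x)))
      (N * (Real.exp (K*x) + K * x * Real.exp (K*x))) x := by
    intro N x
    have h1 : HasDerivAt (fun x => Real.exp (K*x)) (Real.exp (K*x) * (K*1)) x :=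
      ((hasDerivAt_id x).const_mul K).exp
    exact (((hasDerivAt_id x).mul h1).const_mul N).congr_deriv (by simp only [id]; ring)
  have dv : ∀ x ∈ Ioo 0 R, HasDerivAt (fun x => v1 x - v2 x) (-k * (v1 x - v2 x) / x +
      (FF m lam x (w1 x) (v1 x) - FF m lam x (w2 x) (v2 x))) x := by
    intro x hx
    exact ((dv1 x hx).sub (dv2 x hx)).congr_deriv (by ring)
  have step : ∀ N : ℝ, 0 ≤ N → (∀ x ∈ Ioo 0 R,
      |FF m lam x (w1 x) (v1 x) - FF m lam x (w2 x) (v2 x)| ≤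
        N * (Real.exp (K*x) + K * x * Real.exp (K*x))) →
      ∀ x ∈ Icc 0 R, |v1 x - v2 x| ≤ N * (x * Real.exp (K*x)) := by
    intro N hN hb
    refine key_abs k R hk (fun x => v1 x - v2 x) _ (fun x => N * (x * Real.exp (K*x))) _
      (cv1.sub cv2) (by fun_prop) ?_ dv (fun x _ => hβd N x) (by simp [hv1, hv2]) hb
    intro x hx
    have := hx.1
    positivity
  have stepw : ∀ N : ℝ, 0 ≤ N → (∀ x ∈ Icc 0 R, |v1 x - v2 x| ≤ N * (x * Real.exp (K*x))) →
      ∀ x ∈ Icc 0 R, |w1 x - w2 x| ≤ N * (x * Real.exp (K*x)) := by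
    intro N hN hb x hx
    rcases hx.1.eq_or_lt with h0 | h0
    · simp [← h0, hw0]
    have hsub : Icc 0 x ⊆ Icc 0 R := Icc_subset_Icc_right hx.2
    obtain ⟨ξ, hξ, he⟩ := exists_hasDerivAt_eq_slope (fun x => w1 x - w2 x)
      (fun x => v1 x / x - v2 x / x) h0 ((cw1.sub cw2).mono hsub)
      (fun y hy => (dw1 y ⟨hy.1, hy.2.trans_le hx.2⟩).sub (dw2 y ⟨hy.1, hy.2.trans_le hx.2⟩))
    have hξ0 := hξ.1
    have e : w1 x - w2 x = x * ((v1 ξ - v2 ξ) / ξ) := by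
      simp only [hw0, sub_self, sub_zero] at he
      rw [sub_div, he]; field_simp
    rw [e, abs_mul, abs_div, abs_of_pos h0, abs_of_pos hξ0]
    have h1 := hb ξ ⟨hξ0.le, hξ.2.le.trans hx.2⟩
    have h2 : |v1 ξ - v2 ξ| / ξ ≤ N * Real.exp (K*ξ) := by
      rw [div_le_iff₀ hξ0]; linarith
    have h3 : Real.exp (K*ξ) ≤ Real.exp (K*x) := by
      apply Real.exp_le_exp.2
      have := hξ.2.le
      gcongr
    calc x * (|v1 ξ - v2 ξ| / ξ) ≤ x * (N * Real.exp (K*x)) := by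
          gcongr; exact h2.trans (by gcongr)
      _ = _ := by ring
  set C := L * (4*A) with hC
  have hC0 : 0 ≤ C := by positivity
  have main : ∀ j : ℕ, ∀ x ∈ Icc 0 R, |v1 x - v2 x| ≤ (C * (1/2)^j) * (x * Real.exp (K*x)) := by
    intro j
    induction j with
    | zero =>
      apply step _ (by positivity)
      intro x hx
      have hx' : x ∈ Icc 0 R := ⟨hx.1.le, hx.2.le⟩
      have hx0 := hx.1
      have e1 : 1 ≤ Real.exp (K*x) := Real.one_le_exp (by positivity)
      have e2 : 0 ≤ K*x*Real.exp (K*x) := by positivity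
      calc _ ≤ L * (|w1 x - w2 x| + |v1 x - v2 x|) := lip' x hx'
        _ ≤ C := by
          rw [hC]; gcongr
          have := abs_sub (w1 x) (w2 x)
          have := abs_sub (v1 x) (v2 x)
          linarith [hA1 x hx', hA2 x hx', hA3 x hx', hA4 x hx']
        _ = (C * (1/2)^0) * 1 := by simp
        _ ≤ _ := by gcongr; linarith
    | succ j ih =>
      apply step _ (by positivity)
      intro x hx
      have hx' : x ∈ Icc 0 R := ⟨hx.1.le, hx.2.le⟩
      have hx0 := hx.1
      have iw := stepw _ (by positivity) ih x hx'
      have iv := ih x hx'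
      calc _ ≤ L * (|w1 x - w2 x| + |v1 x - v2 x|) := lip' x hx'
        _ ≤ L * ((C * (1/2)^j) * (x * Real.exp (K*x)) + (C * (1/2)^j) * (x * Real.exp (K*x))) := by
          gcongr
        _ = (C * (1/2)^(j+1)) * (0 + K * x * Real.exp (K*x)) := by rw [hK]; ring
        _ ≤ _ := by gcongr; positivity
  have lim : Tendsto (fun j : ℕ => (C * (1/2)^j) * (r * Real.exp (K*r))) atTop (𝓝 ((C * 0) * (r * Real.exp (K*r)))) :=
    ((tendsto_pow_atTop_nhds_zero_of_lt_one (by norm_num) (by norm_num)).const_mul C).mul_const _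
  have := ge_of_tendsto' lim (fun j => stepw _ (by positivity) (main j) r hr)
  simp only [mul_zero, zero_mul] at this
  have := abs_nonpos_iff.1 this
  linarith

lemma conv_sol (n : ℕ) (hn2 : 2 ≤ n) (lam μ₁ ε : ℝ) (hε : 0 < ε) (h : ℝ → ℝ)
    (hs : IsSolOn n lam μ₁ ε h) (w v : ℝ → ℝ)
    (hw : w = fun r => if r = 0 then μ₁ else (h r - 1) / r)
    (hv : v = fun r => if r = 0 then 0 else deriv h r - (h r - 1) / r) :
    ContinuousOn w (Ico 0 ε) ∧ ContinuousOn v (Ico 0 ε) ∧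
    (∀ r ∈ Ico 0 ε, 0 < 1 + r * w r) ∧
    (∀ r ∈ Ioo 0 ε, HasDerivAt w (v r / r) r) ∧
    (∀ r ∈ Ioo 0 ε, HasDerivAt v (-(1 + ((n:ℝ) - 1)/2) * v r / r +
      FF ((n:ℝ) - 1) lam r (w r) (v r)) r) := by
  obtain ⟨c2, c1, ode, h0, hd0⟩ := hs
  have hd : ∀ r ∈ Ioo 0 ε, HasDerivAt h (deriv h r) r := fun r hr =>
    ((c2.differentiableOn (by norm_num) r hr).differentiableAt (Ioo_mem_nhds hr.1 hr.2)).hasDerivAt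
  have c2' := ((contDiffOn_succ_iff_deriv_of_isOpen (n := 1) (isOpen_Ioo (a := (0:ℝ)) (b := ε))).1
    (by simpa [one_add_one_eq_two] using c2)).2.2
  have hdd : ∀ r ∈ Ioo 0 ε, HasDerivAt (deriv h) (deriv (deriv h) r) r := fun r hr =>
    ((c2'.differentiableOn (by norm_num) r hr).differentiableAt (Ioo_mem_nhds hr.1 hr.2)).hasDerivAt
  have hw' : ∀ r, r ≠ 0 → w =ᶠ[𝓝 r] fun r => (h r - 1) / r := by
    intro r hr
    filter_upwards [isOpen_ne.mem_nhds hr] with x hx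
    simp [hw, show x ≠ 0 from hx]
  have hv' : ∀ r, r ≠ 0 → v =ᶠ[𝓝 r] fun r => deriv h r - (h r - 1) / r := by
    intro r hr
    filter_upwards [isOpen_ne.mem_nhds hr] with x hx
    simp [hv, show x ≠ 0 from hx]
  have dw : ∀ r ∈ Ioo 0 ε, HasDerivAt w (v r / r) r := by
    intro r hr
    have hr0 := hr.1.ne'
    refine (HasDerivAt.congr_of_eventuallyEq ?_ (hw' r hr0))
    refine (((hd r hr).sub_const 1).div (hasDerivAt_id r) hr0).congr_deriv ?_
    simp only [hv, id, hr0, if_false]; field_simp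
  have dv : ∀ r ∈ Ioo 0 ε, HasDerivAt v (-(1 + ((n:ℝ) - 1)/2) * v r / r +
      FF ((n:ℝ) - 1) lam r (w r) (v r)) r := by
    intro r hr
    have hr0 := hr.1.ne'
    refine (HasDerivAt.congr_of_eventuallyEq ?_ (hv' r hr0))
    refine ((hdd r hr).sub (((hd r hr).sub_const 1).div (hasDerivAt_id r) hr0)).congr_deriv ?_
    obtain ⟨e, hp⟩ := ode r hr
    have e' : deriv (deriv h) r = (((n : ℝ) - 1) * h r * (h r - 1) +
        r * deriv h r * (r * deriv h r - lam * r - ((n : ℝ) - 1))) / (2 * r ^ 2 * h r) := by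
      rw [← e]; field_simp
    have hh : 1 + r * ((h r - 1) / r) = h r := by field_simp; ring
    have hp' := hp.ne'
    rw [e']
    simp only [hv, hw, id, hr0, if_false, FF, hh]
    field_simp
    ring
  have c1w : ContinuousOn (derivWithin h (Ico 0 ε)) (Ico 0 ε) :=
    c1.continuousOn_derivWithin (uniqueDiffOn_Ico 0 ε) le_rfl
  have mem0 : (0:ℝ) ∈ Ico 0 ε := ⟨le_rfl, hε⟩
  have d0 : derivWithin h (Ico 0 ε) 0 = μ₁ := by
    rw [← hd0]
    rw [← Ici_inter_Iio, derivWithin_inter (Iio_mem_nhds hε)]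
  have hD0 : HasDerivWithinAt h μ₁ (Ico 0 ε) 0 := by
    rw [← d0]; exact (c1.differentiableOn (by norm_num) 0 mem0).hasDerivWithinAt
  have hIoo : Ico 0 ε \ {0} = Ioo 0 ε := by
    ext x; simp only [Set.mem_sdiff, mem_Ico, mem_singleton_iff, mem_Ioo]
    constructor
    · rintro ⟨⟨a, b⟩, c⟩; exact ⟨lt_of_le_of_ne a (Ne.symm c), b⟩
    · rintro ⟨a, b⟩; exact ⟨⟨a.le, b⟩, a.ne'⟩
  have tw : Tendsto (fun r => (h r - 1) / r) (𝓝[Ioo 0 ε] 0) (𝓝 μ₁) := by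
    have := hasDerivWithinAt_iff_tendsto_slope.1 hD0
    rw [hIoo] at this
    refine this.congr fun r => ?_
    simp [slope_def_field, h0]
  have td : Tendsto (deriv h) (𝓝[Ioo 0 ε] 0) (𝓝 μ₁) := by
    have := (c1w 0 mem0).mono_left (nhdsWithin_mono 0 (Ioo_subset_Ico_self))
    rw [d0] at this
    refine this.congr' ?_
    filter_upwards [self_mem_nhdsWithin] with r hr
    exact derivWithin_of_mem_nhds (Ico_mem_nhds hr.1 hr.2)
  have cont : ∀ f : ℝ → ℝ, (∀ r ∈ Ioo 0 ε, ContinuousAt f r) →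
      Tendsto f (𝓝[Ioo 0 ε] 0) (𝓝 (f 0)) → ContinuousOn f (Ico 0 ε) := by
    intro f hf1 hf2 r hr
    rcases hr.1.eq_or_lt with h0 | h0
    · subst h0
      rw [← continuousWithinAt_sdiff_self, hIoo]; exact hf2
    · exact (hf1 r ⟨h0, hr.2⟩).continuousWithinAt
  refine ⟨cont w (fun r hr => (dw r hr).continuousAt) ?_,
    cont v (fun r hr => (dv r hr).continuousAt) ?_, ?_, dw, dv⟩
  · have : w 0 = μ₁ := by simp [hw]
    rw [this]
    refine tw.congr' ?_
    filter_upwards [self_mem_nhdsWithin] with r hr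
    simp [hw, hr.1.ne']
  · have : v 0 = μ₁ - μ₁ := by simp [hv]
    rw [this]
    refine (td.sub tw).congr' ?_
    filter_upwards [self_mem_nhdsWithin] with r hr
    simp [hv, hr.1.ne']
  · intro r hr
    rcases hr.1.eq_or_lt with h0 | h0
    · simp [← h0]
    · have hr0 := h0.ne'
      have hh : 1 + r * ((h r - 1) / r) = h r := by field_simp; ring
      simp only [hw, hr0, if_false, hh]
      exact (ode r ⟨h0, hr.2⟩).2

lemma sol_unique (n : ℕ) (hn2 : 2 ≤ n) (lam μ₁ ε : ℝ) (hε : 0 < ε) (g h : ℝ → ℝ)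
    (hg : IsSolOn n lam μ₁ ε g) (hh : IsSolOn n lam μ₁ ε h) : EqOn g h (Ico 0 ε) := by
  intro R hR
  rcases hR.1.eq_or_lt with h0 | h0
  · rw [← h0, hg.2.2.2.1, hh.2.2.2.1]
  obtain ⟨a1, a2, a3, a4, a5⟩ := conv_sol n hn2 lam μ₁ ε hε g hg _ _ rfl rfl
  obtain ⟨b1, b2, b3, b4, b5⟩ := conv_sol n hn2 lam μ₁ ε hε h hh _ _ rfl rfl
  have s1 : Icc 0 R ⊆ Ico 0 ε := fun x hx => ⟨hx.1, hx.2.trans_lt hR.2⟩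
  have s2 : Ioo 0 R ⊆ Ioo 0 ε := fun x hx => ⟨hx.1, hx.2.trans hR.2⟩
  have hn : (2:ℝ) ≤ n := by exact_mod_cast hn2
  have := uniq ((n:ℝ)-1) lam (1 + ((n:ℝ) - 1)/2) R (by linarith) _ _ _ _ (a1.mono s1) (b1.mono s1)
    (a2.mono s1) (b2.mono s1) (by simp) (by simp) (by simp)
    (fun r hr => a3 r (s1 hr)) (fun r hr => b3 r (s1 hr))
    (fun r hr => a4 r (s2 hr)) (fun r hr => b4 r (s2 hr))
    (fun r hr => a5 r (s2 hr)) (fun r hr => b5 r (s2 hr)) R ⟨hR.1, le_rfl⟩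
  simp only [h0.ne', if_false] at this
  have := (div_left_inj' h0.ne').1 this
  linarith

def cl (A x : ℝ) : ℝ := max (-A) (min A x)

lemma cl_abs (A x : ℝ) (hA : 0 ≤ A) : |cl A x| ≤ A := by
  unfold cl
  rw [abs_le]
  exact ⟨le_max_left _ _, max_le (by linarith) (min_le_left _ _)⟩

lemma cl_eq (A x : ℝ) (h : |x| ≤ A) : cl A x = x := by
  unfold cl
  rw [abs_le] at h
  rw [min_eq_right h.2, max_eq_right h.1]

lemma cl_lip (A x y : ℝ) : |cl A x - cl A y| ≤ |x - y| := by
  unfold cl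
  refine (abs_max_sub_max_le_max _ _ _ _).trans ?_
  simp only [sub_self, abs_zero]
  refine max_le (abs_nonneg _) ((abs_min_sub_min_le_max _ _ _ _).trans ?_)
  simp

lemma cl_cont (A : ℝ) : Continuous (cl A) := by unfold cl; fun_prop

noncomputable def Phi (m lam μ ε A : ℝ) (y : ℝ → ℝ) (s : ℝ) : ℝ :=
  FF m lam (max 0 (min ε s)) (cl A (μ + ∫ x in (0:ℝ)..(max 0 (min ε s)), y x))
    (cl A (max 0 (min ε s) * y (max 0 (min ε s))))

lemma wint (k : ℝ) (hk : 0 < k) (f : ℝ → ℝ) (M : ℝ) (hM : 0 ≤ M) (hf : ∀ s, |f s| ≤ M) :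
    |∫ t in (0:ℝ)..1, t^k * f t| ≤ M := by
  have := intervalIntegral.norm_integral_le_of_norm_le_const (a := (0:ℝ)) (b := 1)
    (f := fun t => t^k * f t) (C := M) ?_
  · simpa using this
  intro t ht
  rw [uIoc_of_le zero_le_one] at ht
  rw [norm_mul, Real.norm_eq_abs, Real.norm_eq_abs, abs_of_nonneg (Real.rpow_nonneg ht.1.le k)]
  have := Real.rpow_le_one ht.1.le ht.2 hk.le
  calc _ ≤ 1 * M := by gcongr; exact hf t
    _ = M := one_mul M

lemma exist_y (m lam μ k : ℝ) (hk : 0 < k) : ∃ ε : ℝ, 0 < ε ∧ ∃ y : ℝ → ℝ, Continuous y ∧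
    ∀ r ∈ Ioo 0 ε, 1/2 ≤ 1 + r * (μ + ∫ x in (0:ℝ)..r, y x) ∧
      HasDerivAt y ((-(k+1) * y r + FF m lam r (μ + ∫ x in (0:ℝ)..r, y x) (r * y r)) / r) r := by
  set A := |μ| + 1 with hA
  have hA0 : 0 ≤ A := by positivity
  obtain ⟨L, hL, lip⟩ := FF_lip m lam A (1/2) 1 hA0 (by norm_num) (by norm_num)
  set ε := 1 / (4*(L+1)*(A+1)) with hε
  have hε0 : 0 < ε := by positivity
  have e0 : ε * (4*(L+1)*(A+1)) = 1 := by rw [hε]; field_simp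
  have e1 : ε ≤ 1 := by nlinarith [mul_nonneg hL.le hA0]
  have e2 : ε * A ≤ 1/2 := by
    have : 0 ≤ ε * (2 * (L+1)*(A+1) - A) := mul_nonneg hε0.le (by nlinarith [mul_nonneg hL.le hA0])
    nlinarith
  have e3 : ε * (L * (2*A)) ≤ 1 := by
    have : 0 ≤ ε * (4 * (L+1)*(A+1) - (L * (2*A))) := mul_nonneg hε0.le (by nlinarith [mul_nonneg hL.le hA0])
    nlinarith
  have e4 : L * (2 * ε) ≤ 1/2 := by
    have : 0 ≤ ε * (2 * (L+1)*(A+1) - (2 * L)) := mul_nonneg hε0.le (by nlinarith [mul_nonneg hL.le hA0])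
    nlinarith
  have c0 : ∀ s, 0 ≤ max 0 (min ε s) := fun s => le_max_left _ _
  have c1 : ∀ s, max 0 (min ε s) ≤ ε := fun s => max_le hε0.le (min_le_left _ _)
  have cabs : ∀ s, |max 0 (min ε s)| ≤ 1 := fun s => by
    rw [abs_of_nonneg (c0 s)]; exact (c1 s).trans e1
  have dpos : ∀ s x, 1/2 ≤ 1 + max 0 (min ε s) * cl A x := by
    intro s x
    have h1 := abs_le.1 (cl_abs A x hA0)
    have : max 0 (min ε s) * A ≤ ε * A := by gcongr; exact c1 s
    nlinarith [mul_le_mul_of_nonneg_left h1.1 (c0 s)]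
  have Pcont : ∀ y : ℝ → ℝ, Continuous y → Continuous (Phi m lam μ ε A y) := by
    intro y hy
    have hI : Continuous fun s => ∫ x in (0:ℝ)..s, y x :=
      intervalIntegral.continuous_primitive (fun a b => hy.intervalIntegrable a b) 0
    have hc : Continuous fun s : ℝ => max 0 (min ε s) := by fun_prop
    have hW : Continuous fun s => cl A (μ + ∫ x in (0:ℝ)..(max 0 (min ε s)), y x) :=
      (cl_cont A).comp (continuous_const.add (hI.comp hc))
    have hV : Continuous fun s => cl A (max 0 (min ε s) * y (max 0 (min ε s))) :=
      (cl_cont A).comp (hc.mul (hy.comp hc))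
    unfold Phi FF
    refine Continuous.div (by fun_prop) (by fun_prop) ?_
    intro s
    have := dpos s (μ + ∫ x in (0:ℝ)..(max 0 (min ε s)), y x)
    positivity
  have Pbd : ∀ (y : ℝ → ℝ) s, |Phi m lam μ ε A y s| ≤ L * (2*A) := by
    intro y s
    have := lip (max 0 (min ε s)) (cl A (μ + ∫ x in (0:ℝ)..(max 0 (min ε s)), y x))
      (cl A (max 0 (min ε s) * y (max 0 (min ε s)))) 0 0 (cabs s) (cl_abs _ _ hA0) (cl_abs _ _ hA0)
      (by simpa using hA0) (by simpa using hA0) (dpos _ _) (by norm_num)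
    have hz : FF m lam (max 0 (min ε s)) 0 0 = 0 := by simp [FF]
    rw [hz, sub_zero, sub_zero, sub_zero] at this
    refine this.trans ?_
    gcongr
    linarith [cl_abs A (μ + ∫ x in (0:ℝ)..(max 0 (min ε s)), y x) hA0,
      cl_abs A (max 0 (min ε s) * y (max 0 (min ε s))) hA0]
  have Plip : ∀ (y z : BoundedContinuousFunction ℝ ℝ) s,
      |Phi m lam μ ε A y s - Phi m lam μ ε A z s| ≤ 1/2 * dist y z := by
    intro y z s
    have h1 := lip (max 0 (min ε s)) (cl A (μ + ∫ x in (0:ℝ)..(max 0 (min ε s)), y x))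
      (cl A (max 0 (min ε s) * y (max 0 (min ε s))))
      (cl A (μ + ∫ x in (0:ℝ)..(max 0 (min ε s)), z x))
      (cl A (max 0 (min ε s) * z (max 0 (min ε s)))) (cabs s) (cl_abs _ _ hA0) (cl_abs _ _ hA0)
      (cl_abs _ _ hA0) (cl_abs _ _ hA0) (dpos _ _) (dpos _ _)
    have hyz : ∀ x, |y x - z x| ≤ dist y z := fun x => by
      rw [← Real.dist_eq]; exact BoundedContinuousFunction.dist_coe_le_dist x
    have h2 : |cl A (μ + ∫ x in (0:ℝ)..(max 0 (min ε s)), y x) -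
        cl A (μ + ∫ x in (0:ℝ)..(max 0 (min ε s)), z x)| ≤ ε * dist y z := by
      refine (cl_lip _ _ _).trans ?_
      rw [add_sub_add_left_eq_sub, ← intervalIntegral.integral_sub
        (y.continuous.intervalIntegrable _ _) (z.continuous.intervalIntegrable _ _)]
      have := intervalIntegral.norm_integral_le_of_norm_le_const (a := (0:ℝ))
        (b := max 0 (min ε s)) (f := fun x => y x - z x) (C := dist y z) (fun x _ => hyz x)
      rw [Real.norm_eq_abs, sub_zero, abs_of_nonneg (c0 s)] at this
      refine this.trans ?_
      rw [mul_comm]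
      gcongr
      exact c1 s
    have h3 : |cl A (max 0 (min ε s) * y (max 0 (min ε s))) -
        cl A (max 0 (min ε s) * z (max 0 (min ε s)))| ≤ ε * dist y z := by
      refine (cl_lip _ _ _).trans ?_
      rw [← mul_sub, abs_mul, abs_of_nonneg (c0 s)]
      gcongr
      · exact c1 s
      · exact hyz _
    refine h1.trans ?_
    calc _ ≤ L * (ε * dist y z + ε * dist y z) := by gcongr
      _ = L * (2*ε) * dist y z := by ring
      _ ≤ _ := by gcongr
  have Tcont : ∀ y : ℝ → ℝ, Continuous y →
      Continuous fun r => ∫ t in (0:ℝ)..1, t^k * Phi m lam μ ε A y (r*t) := by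
    intro y hy
    have h1 := Pcont y hy
    have h2 := Real.continuous_rpow_const hk.le
    apply intervalIntegral.continuous_parametric_intervalIntegral_of_continuous'
    exact (h2.comp continuous_snd).mul (h1.comp (continuous_fst.mul continuous_snd))
  have Tbd : ∀ (y : ℝ → ℝ) r, |∫ t in (0:ℝ)..1, t^k * Phi m lam μ ε A y (r*t)| ≤ L*(2*A) :=
    fun y r => wint k hk _ _ (by positivity) (fun s => Pbd y _)
  let T : BoundedContinuousFunction ℝ ℝ → BoundedContinuousFunction ℝ ℝ := fun y =>
    BoundedContinuousFunction.ofNormedAddCommGroup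
      (fun r => ∫ t in (0:ℝ)..1, t^k * Phi m lam μ ε A y (r*t)) (Tcont y y.continuous)
      (L*(2*A)) (Tbd y)
  have hT : ContractingWith (1/2) T := by
    refine ⟨by norm_num, LipschitzWith.of_dist_le_mul fun y z => ?_⟩
    rw [BoundedContinuousFunction.dist_le (by positivity)]
    intro r
    rw [Real.dist_eq]
    have hint : ∀ y : BoundedContinuousFunction ℝ ℝ, IntervalIntegrable
        (fun t => t^k * Phi m lam μ ε A y (r*t)) MeasureTheory.volume 0 1 := fun y =>
      ((Real.continuous_rpow_const hk.le).mul ((Pcont y y.continuous).comp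
        (continuous_const.mul continuous_id))).intervalIntegrable _ _
    change |(∫ t in (0:ℝ)..1, t^k * Phi m lam μ ε A y (r*t)) -
      ∫ t in (0:ℝ)..1, t^k * Phi m lam μ ε A z (r*t)| ≤ _
    rw [← intervalIntegral.integral_sub (hint y) (hint z)]
    simp_rw [← mul_sub]
    have := wint k hk (fun t => Phi m lam μ ε A y (r*t) - Phi m lam μ ε A z (r*t))
      (1/2 * dist y z) (by positivity) (fun s => Plip y z _)
    simpa using this
  set y := ContractingWith.fixedPoint T hT with hy
  have hfix : T y = y := hT.fixedPoint_isFixedPt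
  have yfix : ∀ r, y r = ∫ t in (0:ℝ)..1, t^k * Phi m lam μ ε A y (r*t) := fun r => by
    conv_lhs => rw [← hfix]
    rfl
  have ybd : ∀ r, |y r| ≤ L*(2*A) := fun r => by rw [yfix]; exact Tbd y r
  have yform : ∀ r, 0 < r → y r = (∫ s in (0:ℝ)..r, s^k * Phi m lam μ ε A y s) / r^(k+1) := by
    intro r hr
    have h1 := intervalIntegral.mul_integral_comp_mul_left (a := 0) (b := 1)
      (f := fun s => s^k * Phi m lam μ ε A y s) (c := r)
    rw [mul_zero, mul_one] at h1
    have hrk := Real.rpow_pos_of_pos hr k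
    rw [← h1, yfix, Real.rpow_add_one hr.ne', eq_div_iff (by positivity)]
    have h2 : ∫ x in (0:ℝ)..1, (r*x)^k * Phi m lam μ ε A y (r*x) =
        ∫ x in (0:ℝ)..1, r^k * (x^k * Phi m lam μ ε A y (r*x)) := by
      apply intervalIntegral.integral_congr
      intro x hx
      rw [uIcc_of_le zero_le_one] at hx
      simp only
      rw [Real.mul_rpow hr.le hx.1]; ring
    rw [h2, intervalIntegral.integral_const_mul]
    ring
  refine ⟨ε, hε0, y, y.continuous, ?_⟩
  intro r hr
  have hr0 := hr.1
  have hcr : max 0 (min ε r) = r := by rw [min_eq_right hr.2.le, max_eq_right hr0.le]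
  have hI : |∫ x in (0:ℝ)..r, y x| ≤ 1 := by
    have := intervalIntegral.norm_integral_le_of_norm_le_const (a := (0:ℝ))
        (b := r) (f := fun x => y x) (C := L*(2*A)) (fun x _ => ybd x)
    rw [Real.norm_eq_abs, sub_zero, abs_of_pos hr0] at this
    refine this.trans (le_trans ?_ e3)
    rw [mul_comm]; gcongr; exact hr.2.le
  have hW : cl A (μ + ∫ x in (0:ℝ)..r, y x) = μ + ∫ x in (0:ℝ)..r, y x := by
    apply cl_eq
    exact (abs_add_le _ _).trans (by rw [hA]; gcongr)
  have hV : cl A (r * y r) = r * y r := by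
    apply cl_eq
    rw [abs_mul, abs_of_pos hr0]
    calc _ ≤ ε * (L*(2*A)) := by
          gcongr
          · exact hr.2.le
          · exact ybd r
      _ ≤ 1 := e3
      _ ≤ A := by rw [hA]; linarith [abs_nonneg μ]
  have hPhi : Phi m lam μ ε A y r = FF m lam r (μ + ∫ x in (0:ℝ)..r, y x) (r * y r) := by
    unfold Phi; rw [hcr, hW, hV]
  constructor
  · have := dpos r (μ + ∫ x in (0:ℝ)..r, y x)
    rwa [hcr, hW] at this
  have hc : Continuous fun s => s^k * Phi m lam μ ε A y s :=
    (Real.continuous_rpow_const hk.le).mul (Pcont y y.continuous)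
  have hd := hc.integral_hasStrictDerivAt 0 r
  have hp := Real.rpow_pos_of_pos hr0 k
  have hd2 := hd.hasDerivAt.div (Real.hasDerivAt_rpow_const (p := k+1) (Or.inl hr0.ne'))
    (by positivity)
  have hev : (y : ℝ → ℝ) =ᶠ[𝓝 r] fun r => (∫ s in (0:ℝ)..r, s^k * Phi m lam μ ε A y s) / r^(k+1) := by
    filter_upwards [Ioi_mem_nhds hr0] with x hx
    exact yform x hx
  refine (HasDerivAt.congr_of_eventuallyEq hd2 hev).congr_deriv ?_
  rw [← hPhi]
  have hy' := yform r hr0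
  rw [Real.rpow_add_one hr0.ne', eq_div_iff (by positivity)] at hy'
  rw [← hy', add_sub_cancel_right, Real.rpow_add_one hr0.ne']
  field_simp
  ring

lemma exists_sol (n : ℕ) (hn2 : 2 ≤ n) (lam μ : ℝ) : ∃ ε : ℝ, 0 < ε ∧
    ∃ h : ℝ → ℝ, IsSolOn n lam μ ε h := by
  have hn : (2:ℝ) ≤ n := by exact_mod_cast hn2
  obtain ⟨ε, hε, y, hy, H⟩ := exist_y ((n:ℝ)-1) lam μ (1 + ((n:ℝ) - 1)/2) (by linarith)
  set w : ℝ → ℝ := fun r => μ + ∫ x in (0:ℝ)..r, y x with hw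
  have dw : ∀ r, HasDerivAt w (y r) r := fun r =>
    (hy.integral_hasStrictDerivAt 0 r).hasDerivAt.const_add μ
  have cw : Continuous w := continuous_iff_continuousAt.2 fun r => (dw r).continuousAt
  have dh : ∀ r, HasDerivAt (fun r => 1 + r * w r) (w r + r * y r) r := fun r =>
    (((hasDerivAt_id r).mul (dw r)).const_add 1).congr_deriv (by simp)
  have hdh : deriv (fun r => 1 + r * w r) = fun r => w r + r * y r := funext fun r => (dh r).deriv
  have ddh : ∀ r ∈ Ioo 0 ε, HasDerivAt (fun r => w r + r * y r)
      (-((n:ℝ)-1)/2 * y r + FF ((n:ℝ)-1) lam r (w r) (r * y r)) r := by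
    intro r hr
    have hr0 := hr.1.ne'
    refine ((dw r).add ((hasDerivAt_id r).mul (H r hr).2)).congr_deriv ?_
    simp only [id]
    field_simp
    ring
  have hC1 : ContDiff ℝ 1 (fun r => 1 + r * w r) := by
    rw [contDiff_one_iff_deriv, hdh]
    exact ⟨fun r => (dh r).differentiableAt, by fun_prop⟩
  refine ⟨ε, hε, fun r => 1 + r * w r, ?_, hC1.contDiffOn, ?_, by simp, ?_⟩
  · have : ContDiffOn ℝ (1+1) (fun r => 1 + r * w r) (Ioo 0 ε) := by
      rw [contDiffOn_succ_iff_deriv_of_isOpen isOpen_Ioo, hdh]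
      refine ⟨hC1.differentiable (by norm_num) |>.differentiableOn, by simp, ?_⟩
      have : ContDiffOn ℝ (0+1) (fun r => w r + r * y r) (Ioo 0 ε) := by
        rw [contDiffOn_succ_iff_deriv_of_isOpen isOpen_Ioo]
        refine ⟨fun r hr => (ddh r hr).differentiableAt.differentiableWithinAt, by simp, ?_⟩
        rw [contDiffOn_zero]
        refine ContinuousOn.congr (f := fun r => -((n:ℝ)-1)/2 * y r + FF ((n:ℝ)-1) lam r (w r) (r * y r)) ?_
          (fun r hr => (ddh r hr).deriv)
        refine ContinuousOn.add (by fun_prop) ?_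
        unfold FF
        refine ContinuousOn.div (by fun_prop) (by fun_prop) ?_
        intro r hr
        have : 1/2 ≤ 1 + r * w r := (H r hr).1
        positivity
      simpa using this
    simpa [one_add_one_eq_two] using this
  · intro r hr
    have hr0 := hr.1.ne'
    have hp : 1/2 ≤ 1 + r * w r := (H r hr).1
    have hp0 : 0 < 1 + r * w r := by linarith
    refine ⟨?_, hp0⟩
    rw [hdh]
    simp only
    rw [(ddh r hr).deriv]
    have hF : (1 + r * w r) * FF ((n:ℝ)-1) lam r (w r) (r * y r) =
      (((n:ℝ)-1)*(r * y r)*w r + ((n:ℝ)-1)*(w r)^2 + (w r+(r * y r))*(w r+(r * y r)-lam)) / 2 := by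
      unfold FF
      rw [mul_div_assoc', mul_comm (2:ℝ), mul_div_mul_left _ _ hp0.ne']
    linear_combination 2 * r^2 * hF
  · rw [(dh 0).hasDerivWithinAt.derivWithin (uniqueDiffWithinAt_Ici 0)]
    simp [hw]

theorem local_existence_uniqueness (lam μ₁ : ℝ) (n : ℕ) (hn2 : 2 ≤ n) (hn4 : n ≤ 4) :
    ∃ ε : ℝ, 0 < ε ∧
      ∃ h : ℝ → ℝ, IsSolOn n lam μ₁ ε h ∧
        ∀ g : ℝ → ℝ, IsSolOn n lam μ₁ ε g → Set.EqOn g h (Set.Ico 0 ε) := by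
  obtain ⟨ε, hε, h, hh⟩ := exists_sol n hn2 lam μ₁
  exact ⟨ε, hε, h, hh, fun g hg => sol_unique n hn2 lam μ₁ ε hε g h hg hh⟩
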